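/- arXiv:2107.08947 — 6 statements merged into one kernel-verified Lean document; each statement's English description precedes it below -/
import Mathlib

section
/- Let P be a nonzero polynomial with real coefficients of degree n, and let x, y ∈ ℝ satisfy P(x) = P(y) = 0. If for every i with 1 ≤ i ≤ n the signs of P^{(i)}(x) and P^{(i)}(y) agree (i.e., sign(P^{(i)}(x)) = sign(P^{(i)}(y)) as elements of {−1, 0, 1}), then x = y. -/
/-! Agreement of signs gives `0 ≤ P⁽ⁱ⁾(x) * P⁽ⁱ⁾(y)` for `1 ≤ i ≤ deg P`. By induction on the
degree, between `x` and `y` the derivative `P'` takes only values between `P'(x)` and `P'(y)`;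
since `0 ≤ P'(x) * P'(y)`, it does not change sign there, so `P` is monotone or antitone and in
turn takes only values between `P(x)` and `P(y)`. If `P(x) = P(y)` and `x ≠ y`, then `P` is
constant on a nondegenerate interval, hence constant. -/

open Polynomial Set

theorem uIcc_subset_Ici_or_uIcc_subset_Iic_of_mul_nonneg {R : Type*} [Ring R] [LinearOrder R]
    [IsStrictOrderedRing R] {a b : R} (hab : 0 ≤ a * b) :
    uIcc a b ⊆ Ici 0 ∨ uIcc a b ⊆ Iic 0 :=
  (mul_nonneg_iff.mp hab).imp (fun h => ordConnected_Ici.uIcc_subset h.1 h.2)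
    (fun h => ordConnected_Iic.uIcc_subset h.1 h.2)

theorem mul_nonneg_of_real_sign_eq {a b : ℝ} (hab : Real.sign a = Real.sign b) : 0 ≤ a * b := by
  have ha : 0 ≤ Real.sign a * a := Real.sign_mul_nonneg a
  have hb : 0 ≤ Real.sign a * b := hab ▸ Real.sign_mul_nonneg b
  obtain hs | hs | hs := Real.sign_apply_eq a
  · rw [hs, neg_one_mul, neg_nonneg] at ha hb
    exact mul_nonneg_of_nonpos_of_nonpos ha hb
  · rw [Real.sign_eq_zero_iff.mp hs, zero_mul]
  · rw [hs, one_mul] at ha hb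
    exact mul_nonneg ha hb

theorem monotoneOn_eval_of_derivative_nonneg {P : ℝ[X]} {s : Set ℝ} (hs : Convex ℝ s)
    (hP : ∀ t ∈ s, 0 ≤ P.derivative.eval t) : MonotoneOn (fun t => P.eval t) s :=
  monotoneOn_of_deriv_nonneg hs P.continuousOn P.differentiable.differentiableOn fun t ht =>
    P.deriv.symm ▸ hP t (interior_subset ht)

theorem antitoneOn_eval_of_derivative_nonpos {P : ℝ[X]} {s : Set ℝ} (hs : Convex ℝ s)
    (hP : ∀ t ∈ s, P.derivative.eval t ≤ 0) : AntitoneOn (fun t => P.eval t) s :=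
  antitoneOn_of_deriv_nonpos hs P.continuousOn P.differentiable.differentiableOn fun t ht =>
    P.deriv.symm ▸ hP t (interior_subset ht)

theorem mapsTo_eval_uIcc_of_derivative_mapsTo_uIcc {P : ℝ[X]} {x y : ℝ}
    (hmul : 0 ≤ P.derivative.eval x * P.derivative.eval y)
    (hmaps : MapsTo (fun t => P.derivative.eval t) (uIcc x y)
      (uIcc (P.derivative.eval x) (P.derivative.eval y))) :
    MapsTo (fun t => P.eval t) (uIcc x y) (uIcc (P.eval x) (P.eval y)) := by
  obtain hsub | hsub := uIcc_subset_Ici_or_uIcc_subset_Iic_of_mul_nonneg hmul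
  · exact (monotoneOn_eval_of_derivative_nonneg (convex_uIcc x y)
      fun _ ht => hsub (hmaps ht)).mapsTo_uIcc
  · exact (antitoneOn_eval_of_derivative_nonpos (convex_uIcc x y)
      fun _ ht => hsub (hmaps ht)).mapsTo_uIcc

theorem mapsTo_eval_uIcc_of_iterate_derivative_mul_nonneg {P : ℝ[X]} {x y : ℝ}
    (hmul : ∀ i : ℕ, 1 ≤ i → i ≤ P.natDegree →
      0 ≤ (derivative^[i] P).eval x * (derivative^[i] P).eval y) :
    MapsTo (fun t => P.eval t) (uIcc x y) (uIcc (P.eval x) (P.eval y)) := by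
  induction hn : P.natDegree using Nat.strong_induction_on generalizing P with
  | _ n ih =>
    by_cases hdeg : P.natDegree = 0
    · obtain ⟨c, rfl⟩ := natDegree_eq_zero.mp hdeg
      simp [MapsTo]
    · have hlt : P.derivative.natDegree < P.natDegree := natDegree_derivative_lt hdeg
      have hmul' : 0 ≤ P.derivative.eval x * P.derivative.eval y := hmul 1 le_rfl (by omega)
      exact mapsTo_eval_uIcc_of_derivative_mapsTo_uIcc hmul' <|
        ih _ (hn ▸ hlt) (fun i _ hi => hmul (i + 1) (by omega) (by omega)) rfl

theorem natDegree_eq_zero_of_infinite_eval_eq {R : Type*} [CommRing R] [IsDomain R] {P : R[X]}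
    {c : R} (h : {t | P.eval t = c}.Infinite) : P.natDegree = 0 := by
  have hPc : P = C c := eq_of_infinite_eval_eq P (C c) (by simpa only [eval_C] using h)
  rw [hPc, natDegree_C]

theorem thom_encoding_unique_general {P : ℝ[X]} (hP : P.natDegree ≠ 0) {x y : ℝ}
    (hxy : P.eval x = P.eval y)
    (hmul : ∀ i : ℕ, 1 ≤ i → i ≤ P.natDegree →
      0 ≤ (derivative^[i] P).eval x * (derivative^[i] P).eval y) :
    x = y := by
  by_contra hne
  have hconst : uIcc x y ⊆ {t | P.eval t = P.eval x} := fun t ht => by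
    simpa [← hxy] using mapsTo_eval_uIcc_of_iterate_derivative_mul_nonneg hmul ht
  have hinf : (uIcc x y).Infinite := Icc_infinite (inf_lt_sup.mpr hne)
  exact hP (natDegree_eq_zero_of_infinite_eval_eq (hinf.mono hconst))

/-- Uniqueness of Thom encodings: two real roots of a nonzero polynomial `P` of degree `n`
at which all the derivatives `P^{(i)}`, `1 ≤ i ≤ n`, have the same signs, are equal. -/
theorem thom_encoding_unique
    (P : Polynomial ℝ) (hP : P ≠ 0) (x y : ℝ)
    (hx : P.eval x = 0) (hy : P.eval y = 0)
    (hsign : ∀ i : ℕ, 1 ≤ i → i ≤ P.natDegree →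
      Real.sign ((Polynomial.derivative^[i] P).eval x) =
        Real.sign ((Polynomial.derivative^[i] P).eval y)) :
    x = y :=
  thom_encoding_unique_general (natDegree_pos_iff_degree_pos.mpr (degree_pos_of_root hP hx)).ne'
    (hx.trans hy.symm) fun i hi hin => mul_nonneg_of_real_sign_eq (hsign i hi hin)
end

section
/- Let P be a polynomial with real coefficients of degree n and let σ : {0, 1, …, n} → {−1, 0, 1} be a sign condition. Then the set R(σ) = {x ∈ ℝ : sign(P^{(i)}(x)) = σ(i) for all 0 ≤ i ≤ n} is convex; in particular it is empty, a single point, or an interval. -/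
/-!
On an interval where `f'` keeps a weak sign, `f` is monotone or antitone, so the points of that
interval at which `f` takes values in a given interval form an interval again. Starting from the
highest derivative, which is constant, and adding the conditions on the lower derivatives one at a
time therefore never leaves the class of intervals. A sign condition is a special case, since the
reals of a given sign form an interval on one side of `0`.
-/

open Set Polynomial

theorem ordConnected_inter_preimage {α β : Type*} [Preorder α] [Preorder β] {f : α → β}
    {s : Set α} {t : Set β} (hs : s.OrdConnected) (ht : t.OrdConnected)
    (hf : MonotoneOn f s ∨ AntitoneOn f s) : (s ∩ f ⁻¹' t).OrdConnected := by
  obtain ⟨u, hu, hsu⟩ : ∃ u, u.OrdConnected ∧ s ∩ f ⁻¹' t = s ∩ u :=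
    hf.elim ht.preimage_monotoneOn ht.preimage_antitoneOn
  exact hsu ▸ hs.inter hu

theorem monotoneOn_or_antitoneOn_of_hasDerivWithinAt {f f' : ℝ → ℝ} {s : Set ℝ}
    (hs : s.OrdConnected) (hf : ∀ x ∈ s, HasDerivWithinAt f (f' x) s x)
    (hf' : MapsTo f' s (Ici 0) ∨ MapsTo f' s (Iic 0)) : MonotoneOn f s ∨ AntitoneOn f s := by
  have hcont : ContinuousOn f s := fun x hx ↦ (hf x hx).continuousWithinAt
  have hderiv : ∀ x ∈ interior s, HasDerivWithinAt f (f' x) (interior s) x :=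
    fun x hx ↦ (hf x (interior_subset hx)).mono interior_subset
  exact hf'.imp
    (fun h ↦ monotoneOn_of_hasDerivWithinAt_nonneg hs.convex hcont hderiv
      fun _ hx ↦ h (interior_subset hx))
    (fun h ↦ antitoneOn_of_hasDerivWithinAt_nonpos hs.convex hcont hderiv
      fun _ hx ↦ h (interior_subset hx))

theorem ordConnected_setOf_forall_derivs_mem {S : Set ℝ} {n : ℕ} {F : ℕ → ℝ → ℝ} {T : ℕ → Set ℝ}
    (hF : ∀ i < n, ∀ x ∈ S, HasDerivWithinAt (F i) (F (i + 1) x) S x)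
    (hT : ∀ i, (T i).OrdConnected) (hT₀ : ∀ i, T (i + 1) ⊆ Ici 0 ∨ T (i + 1) ⊆ Iic 0)
    (htop : {x ∈ S | F n x ∈ T n}.OrdConnected) :
    {x ∈ S | ∀ i ≤ n, F i x ∈ T i}.OrdConnected := by
  induction n generalizing F T with
  | zero => simpa only [Nat.le_zero, forall_eq] using htop
  | succ n ih =>
    set A : Set ℝ := {x ∈ S | ∀ i ≤ n, F (i + 1) x ∈ T (i + 1)} with hA
    have hAS : A ⊆ S := sep_subset _ _
    have hA_ordConnected : A.OrdConnected :=
      ih (F := fun i ↦ F (i + 1)) (T := fun i ↦ T (i + 1)) (fun i hi ↦ hF (i + 1) (by lia))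
        (fun i ↦ hT (i + 1)) (fun i ↦ hT₀ (i + 1)) htop
    have hF₁ : MapsTo (F 1) A (T 1) := fun x hx ↦ hx.2 0 n.zero_le
    have hF₀ : MonotoneOn (F 0) A ∨ AntitoneOn (F 0) A :=
      monotoneOn_or_antitoneOn_of_hasDerivWithinAt hA_ordConnected
        (fun x hx ↦ (hF 0 n.succ_pos x (hAS hx)).mono hAS)
        ((hT₀ 0).imp hF₁.mono_right hF₁.mono_right)
    have hsplit : {x ∈ S | ∀ i ≤ n + 1, F i x ∈ T i} = A ∩ F 0 ⁻¹' T 0 := by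
      ext x
      simp only [hA, mem_ofPred_eq, mem_inter_iff, mem_preimage, ← Nat.lt_succ_iff,
        Nat.forall_lt_succ_left]
      tauto
    exact hsplit ▸ ordConnected_inter_preimage hA_ordConnected (hT 0) hF₀

theorem exists_iterate_derivative_natDegree_eq_C {R : Type*} [Semiring R] (P : R[X]) :
    ∃ c, derivative^[P.natDegree] P = C c :=
  ⟨_, eq_C_of_natDegree_le_zero <| by simpa using P.natDegree_iterate_derivative P.natDegree⟩

theorem thom_lemma_realization_convex_general (P : ℝ[X]) {T : ℕ → Set ℝ}
    (hT : ∀ i, (T i).OrdConnected) (hT₀ : ∀ i, T (i + 1) ⊆ Ici 0 ∨ T (i + 1) ⊆ Iic 0) :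
    Convex ℝ {x : ℝ | ∀ i ≤ P.natDegree, (derivative^[i] P).eval x ∈ T i} := by
  have hderiv : ∀ i x, HasDerivWithinAt (fun y ↦ (derivative^[i] P).eval y)
      ((derivative^[i + 1] P).eval x) univ x := fun i x ↦ by
    simpa only [Function.iterate_succ_apply'] using (derivative^[i] P).hasDerivWithinAt x univ
  have htop : {x ∈ univ | (derivative^[P.natDegree] P).eval x ∈ T P.natDegree}.OrdConnected := by
    obtain ⟨c, hc⟩ := exists_iterate_derivative_natDegree_eq_C P
    simp only [mem_univ, true_and, hc, eval_C]
    exact (hT _).preimage_mono monotone_const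
  simpa only [mem_univ, true_and] using
    (ordConnected_setOf_forall_derivs_mem (fun i _ x _ ↦ hderiv i x) hT hT₀ htop).convex

theorem monotone_real_sign : Monotone Real.sign := by
  intro a b hab
  unfold Real.sign
  split_ifs <;> linarith

theorem ordConnected_real_sign_fiber (s : ℝ) : (Real.sign ⁻¹' {s}).OrdConnected :=
  ordConnected_singleton.preimage_mono monotone_real_sign

theorem real_sign_fiber_subset_Ici_or_subset_Iic (s : ℝ) :
    Real.sign ⁻¹' {s} ⊆ Ici 0 ∨ Real.sign ⁻¹' {s} ⊆ Iic 0 := by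
  rcases le_total 0 s with hs | hs
  · refine .inl fun x (hx : Real.sign x = s) ↦ mem_Ici.2 (not_lt.1 fun hneg ↦ ?_)
    linarith [Real.sign_of_neg hneg]
  · refine .inr fun x (hx : Real.sign x = s) ↦ mem_Iic.2 (not_lt.1 fun hpos ↦ ?_)
    linarith [Real.sign_of_pos hpos]

/-- Thom's lemma: for a real polynomial `P` of degree `n` and a sign condition
`σ : {0,…,n} → {−1,0,1}`, the realization
`R(σ) = {x ∈ ℝ : sign(P^{(i)}(x)) = σ(i), 0 ≤ i ≤ n}` is convex
(hence empty, a point, or an interval). -/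
theorem thom_lemma_realization_convex
    (P : Polynomial ℝ) (σ : ℕ → ℝ)
    (hσ : ∀ i : ℕ, σ i = -1 ∨ σ i = 0 ∨ σ i = 1) :
    Convex ℝ {x : ℝ | ∀ i : ℕ, i ≤ P.natDegree →
      Real.sign ((Polynomial.derivative^[i] P).eval x) = σ i} :=
  thom_lemma_realization_convex_general P (fun i ↦ ordConnected_real_sign_fiber (σ i))
    fun i ↦ real_sign_fiber_subset_Ici_or_subset_Iic (σ (i + 1))
end

section
/- Let P be a polynomial with real coefficients of degree n and let σ : {0, 1, …, n} → {−1, 0, 1} be a sign condition such that the set R(σ) = {x ∈ ℝ : sign(P^{(i)}(x)) = σ(i) for all 0 ≤ i ≤ n} is nonempty. Then the topological closure of R(σ) equals the realization of the associated weak sign condition, namely the set of x ∈ ℝ such that for all 0 ≤ i ≤ n: P^{(i)}(x) = 0 if σ(i) = 0, P^{(i)}(x) ≥ 0 if σ(i) = 1, and P^{(i)}(x) ≤ 0 if σ(i) = −1. -/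
/-!
Thom's lemma: let `a ∈ R(σ)` and let `b` satisfy the weak sign condition. By induction on the
degree, each member of the family has on the open segment from `a` to `b` the sign it has at `a`:
its derivative has constant sign there, so the polynomial is strictly monotone or constant and its
value at an inner point lies in the open segment between its values at `a` and `b`, the latter
being zero or of the same sign as the former. Hence the open segment lies in `R(σ)`, and `b` in its
closure.
-/

open Polynomial Set
open SignType (sign)

section Sign

theorem isClosed_setOf_eq_zero_or_sign_eq {α : Type*} [Zero α] [LinearOrder α]
    [TopologicalSpace α] [OrderClosedTopology α] (s : SignType) :
    IsClosed {t : α | t = 0 ∨ sign t = s} := by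
  rcases s.trichotomy with rfl | rfl | rfl
  · simp only [sign_eq_neg_one_iff, ← le_iff_eq_or_lt]
    exact isClosed_Iic
  · simp only [sign_eq_zero_iff, or_self]
    exact isClosed_singleton
  · simp only [sign_eq_one_iff, eq_comm (b := (0 : α)), ← le_iff_eq_or_lt]
    exact isClosed_Ici

theorem mem_openSegment_of_sign_sub_eq {𝕜 : Type*} [Field 𝕜] [LinearOrder 𝕜]
    [IsStrictOrderedRing 𝕜] {x y z : 𝕜} (h : sign (z - x) = sign (y - z)) :
    z ∈ openSegment 𝕜 x y := by
  rcases lt_trichotomy x z with hxz | rfl | hzx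
  · have hzy : z < y := by
      rwa [sign_pos (sub_pos.2 hxz), eq_comm, sign_eq_one_iff, sub_pos] at h
    rw [openSegment_eq_Ioo (hxz.trans hzy)]
    exact ⟨hxz, hzy⟩
  · have hyx : y = x := by
      rwa [sub_self, sign_zero, eq_comm, sign_eq_zero_iff, sub_eq_zero] at h
    rw [hyx, openSegment_same]
    exact mem_singleton x
  · have hyz : y < z := by
      rwa [sign_neg (sub_neg.2 hzx), eq_comm, sign_eq_neg_one_iff, sub_neg] at h
    rw [openSegment_symm, openSegment_eq_Ioo (hyz.trans hzx)]
    exact ⟨hyz, hzx⟩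

variable {R : Type*} [Ring R] [LinearOrder R] [IsStrictOrderedRing R]

theorem sign_eq_of_mem_openSegment {x y z : R} (hy : y = 0 ∨ sign y = sign x)
    (hz : z ∈ openSegment R x y) : sign z = sign x := by
  obtain ⟨c, d, hc, hd, -, rfl⟩ := hz
  simp only [smul_eq_mul]
  rcases hy with rfl | hy
  · rw [mul_zero, add_zero, sign_mul, sign_pos hc, one_mul]
  rcases lt_trichotomy x 0 with hx | rfl | hx
  · rw [sign_neg hx, sign_eq_neg_one_iff] at hy
    rw [sign_neg hx, sign_neg]
    exact add_neg (mul_neg_of_pos_of_neg hc hx) (mul_neg_of_pos_of_neg hd hy)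
  · rw [sign_zero, sign_eq_zero_iff] at hy
    rw [hy, mul_zero, mul_zero, add_zero]
  · rw [sign_pos hx, sign_eq_one_iff] at hy
    rw [sign_pos hx, sign_pos]
    positivity

theorem sign_signType_coe (s : SignType) : sign (s : R) = s := by
  rcases s.trichotomy with rfl | rfl | rfl
  · rw [SignType.coe_neg_one, sign_neg neg_one_lt_zero]
  · rw [SignType.coe_zero, sign_zero]
  · rw [SignType.coe_one, sign_one]

theorem real_sign_eq_coe_sign (r : ℝ) : Real.sign r = sign r := by
  rcases lt_trichotomy r 0 with hr | rfl | hr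
  · rw [Real.sign_of_neg hr, sign_neg hr, SignType.coe_neg_one]
  · rw [Real.sign_zero, sign_zero, SignType.coe_zero]
  · rw [Real.sign_of_pos hr, sign_pos hr, SignType.coe_one]

theorem real_sign_eq_real_sign_iff {r s : ℝ} : Real.sign r = Real.sign s ↔ sign r = sign s := by
  rw [real_sign_eq_coe_sign, real_sign_eq_coe_sign]
  exact (Function.LeftInverse.injective sign_signType_coe).eq_iff

theorem eq_zero_or_sign_eq_sign_iff {r s : ℝ} :
    (r = 0 ∨ sign r = sign s) ↔
      (Real.sign s = 0 → r = 0) ∧ (Real.sign s = 1 → 0 ≤ r) ∧ (Real.sign s = -1 → r ≤ 0) := by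
  rcases lt_trichotomy s 0 with hs | rfl | hs
  · norm_num [sign_neg hs, Real.sign_of_neg hs, sign_eq_neg_one_iff, le_iff_eq_or_lt]
  · simp
  · norm_num [sign_pos hs, Real.sign_of_pos hs, sign_eq_one_iff, le_iff_eq_or_lt, eq_comm (a := r)]

end Sign

theorem mapsTo_openSegment_of_sign_deriv_eq {f : ℝ → ℝ} {a b : ℝ} {s : SignType}
    (hfc : ContinuousOn f (segment ℝ a b)) (hfd : DifferentiableOn ℝ f (openSegment ℝ a b))
    (hs : ∀ x ∈ openSegment ℝ a b, sign (deriv f x) = s) :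
    MapsTo f (openSegment ℝ a b) (openSegment ℝ (f a) (f b)) := by
  wlog hab : a < b generalizing a b
  · rcases (not_lt.1 hab).eq_or_lt with rfl | hba
    · simp only [openSegment_same, mapsTo_singleton, mem_singleton_iff]
    · rw [openSegment_symm ℝ a b, openSegment_symm ℝ (f a)]
      rw [segment_symm] at hfc
      rw [openSegment_symm] at hfd hs
      exact this hfc hfd hs hba
  rw [segment_eq_Icc hab.le] at hfc
  rw [openSegment_eq_Ioo hab] at hfd hs ⊢
  have sign_sub_eq : ∀ u v, a ≤ u → u < v → v ≤ b → sign (f v - f u) = s := by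
    intro u v hau huv hvb
    obtain ⟨c, hc, hslope⟩ := exists_deriv_eq_slope f huv (hfc.mono (Icc_subset_Icc hau hvb))
      (hfd.mono (Ioo_subset_Ioo hau hvb))
    rw [eq_div_iff (sub_ne_zero.2 huv.ne')] at hslope
    rw [← hslope, sign_mul, sign_pos (sub_pos.2 huv), mul_one,
      hs c (Ioo_subset_Ioo hau hvb hc)]
  rintro y ⟨hay, hyb⟩
  exact mem_openSegment_of_sign_sub_eq <|
    (sign_sub_eq a y le_rfl hay hyb.le).trans (sign_sub_eq y b hay.le hyb le_rfl).symm

/-- The polynomials `F i`, `i ∈ I`, form a family closed under differentiation, up to the zero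
polynomial. Zero is admitted separately so that the list `P, P', …, P^{(n)}` of the derivatives of
a polynomial of degree `n`, which stops at a constant, is such a family. -/
def IsDerivativeClosed {R ι : Type*} [Semiring R] (I : Set ι) (F : ι → R[X]) : Prop :=
  ∀ i ∈ I, derivative (F i) = 0 ∨ ∃ j ∈ I, F j = derivative (F i)

theorem isDerivativeClosed_iterate_derivative {R : Type*} [Semiring R] (P : R[X]) :
    IsDerivativeClosed (Iic P.natDegree) fun i => derivative^[i] P := by
  intro i hi
  simp only [← Function.iterate_succ_apply']
  rcases (mem_Iic.1 hi).eq_or_lt with rfl | hlt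
  · exact .inl (iterate_derivative_eq_zero (Nat.lt_succ_self _))
  · exact .inr ⟨i + 1, hlt, rfl⟩

section Thom

variable {ι : Type*} {I : Set ι} {F : ι → ℝ[X]}

theorem sign_eval_eq_of_mem_openSegment (hF : IsDerivativeClosed I F) {a b : ℝ}
    (hb : ∀ i ∈ I, (F i).eval b = 0 ∨ sign ((F i).eval b) = sign ((F i).eval a))
    {i : ι} (hi : i ∈ I) {x : ℝ} (hx : x ∈ openSegment ℝ a b) :
    sign ((F i).eval x) = sign ((F i).eval a) := by
  induction hn : (F i).natDegree using Nat.strong_induction_on generalizing i x with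
  | _ n ih =>
    have sign_derivative_eq : ∀ y ∈ openSegment ℝ a b,
        sign ((derivative (F i)).eval y) = sign ((derivative (F i)).eval a) := by
      intro y hy
      by_cases hzero : derivative (F i) = 0
      · simp only [hzero, eval_zero]
      obtain ⟨j, hj, hji⟩ := (hF i hi).resolve_left hzero
      have hlt : (F j).natDegree < n := by
        rw [hji, ← hn]
        exact natDegree_derivative_lt (mt derivative_of_natDegree_zero hzero)
      simpa only [hji] using ih _ hlt hj hy rfl
    refine sign_eq_of_mem_openSegment (hb i hi) ?_
    refine mapsTo_openSegment_of_sign_deriv_eq (f := fun y => (F i).eval y)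
      (s := sign ((derivative (F i)).eval a)) (F i).continuousOn (F i).differentiableOn ?_ hx
    simpa only [Polynomial.deriv] using sign_derivative_eq

theorem closure_setOf_sign_eval_eq (hF : IsDerivativeClosed I F) (a : ℝ) :
    closure {x | ∀ i ∈ I, sign ((F i).eval x) = sign ((F i).eval a)} =
      {x | ∀ i ∈ I, (F i).eval x = 0 ∨ sign ((F i).eval x) = sign ((F i).eval a)} := by
  refine Subset.antisymm (closure_minimal (fun x hx i hi => .inr (hx i hi)) ?_) fun b hb => ?_
  · simp only [ofPred_forall]
    exact isClosed_biInter fun i _ =>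
      (isClosed_setOf_eq_zero_or_sign_eq _).preimage (F i).continuous
  · have hsub : openSegment ℝ a b ⊆ {x | ∀ i ∈ I, sign ((F i).eval x) = sign ((F i).eval a)} :=
      fun x hx i hi => sign_eval_eq_of_mem_openSegment hF hb hi hx
    exact closure_mono hsub (segment_subset_closure_openSegment (right_mem_segment ℝ a b))

theorem closure_of_sign_condition_realization_general (hF : IsDerivativeClosed I F) {σ : ι → ℝ}
    (hne : {x : ℝ | ∀ i ∈ I, Real.sign ((F i).eval x) = σ i}.Nonempty) :
    closure {x : ℝ | ∀ i ∈ I, Real.sign ((F i).eval x) = σ i} =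
      {x : ℝ | ∀ i ∈ I, (σ i = 0 → (F i).eval x = 0) ∧ (σ i = 1 → 0 ≤ (F i).eval x) ∧
        (σ i = -1 → (F i).eval x ≤ 0)} := by
  obtain ⟨a, ha⟩ := hne
  have hσ : ∀ i ∈ I, σ i = Real.sign ((F i).eval a) := fun i hi => (ha i hi).symm
  simp +contextual only [hσ, real_sign_eq_real_sign_iff, ← eq_zero_or_sign_eq_sign_iff]
  exact closure_setOf_sign_eval_eq hF a

end Thom

/-- Generalized Thom lemma (univariate case): if the realization `R(σ)` of a sign
condition on `P, P', …, P^{(n)}` is nonempty, then its topological closure equals the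
realization of the associated weak sign condition. -/
theorem closure_of_sign_condition_realization
    (P : Polynomial ℝ) (σ : ℕ → ℝ)
    (hσ : ∀ i : ℕ, σ i = -1 ∨ σ i = 0 ∨ σ i = 1)
    (hne : {x : ℝ | ∀ i : ℕ, i ≤ P.natDegree →
      Real.sign ((Polynomial.derivative^[i] P).eval x) = σ i}.Nonempty) :
    closure {x : ℝ | ∀ i : ℕ, i ≤ P.natDegree →
        Real.sign ((Polynomial.derivative^[i] P).eval x) = σ i}
      = {x : ℝ | ∀ i : ℕ, i ≤ P.natDegree →
          (σ i = 0 → (Polynomial.derivative^[i] P).eval x = 0) ∧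
          (σ i = 1 → 0 ≤ (Polynomial.derivative^[i] P).eval x) ∧
          (σ i = -1 → (Polynomial.derivative^[i] P).eval x ≤ 0)} :=
  closure_of_sign_condition_realization_general (isDerivativeClosed_iterate_derivative P) hne
end

section
/- Let P be a nonzero polynomial with real coefficients of degree n, and let x ∈ ℝ be a root of P. Then x is the unique real number y with the following property: for every 0 ≤ i ≤ n, P^{(i)}(y) = 0 whenever P^{(i)}(x) = 0, P^{(i)}(y) ≥ 0 whenever P^{(i)}(x) > 0, and P^{(i)}(y) ≤ 0 whenever P^{(i)}(x) < 0. -/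
/-!
Fix `a < b` in an ordered field and consider the convex cone generated by the polynomials
`(X - a)^i (b - X)^j`, all of which are nonnegative on `[a, b]`. Integration by parts shows that the
primitive vanishing at `a` of an element of the cone is again in the cone; reflecting `[a, b]`, if
`P'` lies in the cone then so do `P - P(a)` and `P(b) - P`.

Suppose now that no derivative of `P` takes values of strictly opposite signs at `a` and `b`. By
induction on the degree, `P` or `-P` lies in the cone: if `P'` does, then `P(a) ≥ 0` puts `P` in the
cone and `P(b) ≤ 0` puts `-P` there. If moreover `P(a) = P(b) = 0` and, say, `P'` lies in the cone,
then `P = P - P(a)` and `-P = P(b) - P` both do, so `P` vanishes on `[a, b]` and hence is zero.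

The cone takes the place of Rolle's theorem, which fails for polynomials over a general ordered
field.
-/

open Polynomial

section OrderedRing

variable {R : Type*} [CommRing R] [PartialOrder R] [IsOrderedRing R] {a b : R} {p : R[X]}

/-- The convex cone of polynomials generated by the products `(X - a) ^ i * (b - X) ^ j`.
When `a < b` in a field, these are positive multiples of the Bernstein polynomials of `[a, b]`.
Membership is an algebraic certificate of nonnegativity on `[a, b]`. -/
noncomputable def bernsteinCone (a b : R) : PointedCone R R[X] :=
  PointedCone.hull R (Set.range fun e : ℕ × ℕ => (X - C a) ^ e.1 * (C b - X) ^ e.2)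

theorem X_sub_C_pow_mul_C_sub_X_pow_mem_bernsteinCone (a b : R) (i j : ℕ) :
    (X - C a) ^ i * (C b - X) ^ j ∈ bernsteinCone a b :=
  PointedCone.subset_hull ⟨(i, j), rfl⟩

theorem C_mem_bernsteinCone {c : R} (hc : 0 ≤ c) : C c ∈ bernsteinCone a b := by
  simpa [smul_eq_C_mul] using
    (bernsteinCone a b).smul_mem hc (X_sub_C_pow_mul_C_sub_X_pow_mem_bernsteinCone a b 0 0)

theorem eval_nonneg_of_mem_bernsteinCone (hp : p ∈ bernsteinCone a b) {z : R}
    (hz : z ∈ Set.Icc a b) : 0 ≤ p.eval z := by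
  suffices bernsteinCone a b ≤ (PointedCone.positive R R).comap (leval z) from this hp
  refine Submodule.span_le.mpr ?_
  rintro _ ⟨⟨i, j⟩, rfl⟩
  have hza : 0 ≤ z - a := sub_nonneg.mpr hz.1
  have hbz : 0 ≤ b - z := sub_nonneg.mpr hz.2
  simpa [leval] using mul_nonneg (pow_nonneg hza i) (pow_nonneg hbz j)

theorem comp_C_add_sub_X_mem_bernsteinCone (hp : p ∈ bernsteinCone a b) :
    p.comp (C (a + b) - X) ∈ bernsteinCone a b := by
  suffices bernsteinCone a b ≤
      (bernsteinCone a b).comap (aeval (C (a + b) - X : R[X])).toLinearMap by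
    simpa only [comp_eq_aeval, PointedCone.mem_comap, AlgHom.toLinearMap_apply] using this hp
  refine Submodule.span_le.mpr ?_
  rintro _ ⟨⟨i, j⟩, rfl⟩
  have hX : C (a + b) - X - C a = C b - X := by rw [C_add]; ring
  have hX' : C b - (C (a + b) - X) = X - C a := by rw [C_add]; ring
  suffices ((X - C a) ^ i * (C b - X) ^ j).comp (C (a + b) - X) ∈ bernsteinCone a b by
    simpa only [comp_eq_aeval, SetLike.mem_coe, PointedCone.mem_comap, AlgHom.toLinearMap_apply]
      using this
  simpa only [mul_comp, pow_comp, sub_comp, X_comp, C_comp, hX, hX', mul_comm] using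
    X_sub_C_pow_mul_C_sub_X_pow_mem_bernsteinCone a b j i

end OrderedRing

section Field

variable {K : Type*} [Field K] [LinearOrder K] [IsStrictOrderedRing K] {a b : K} {p : K[X]}

theorem eq_zero_of_mem_bernsteinCone_of_neg_mem (hab : a < b) (hp : p ∈ bernsteinCone a b)
    (hp' : -p ∈ bernsteinCone a b) : p = 0 := by
  refine p.eq_zero_of_infinite_isRoot ((Set.Icc_infinite hab).mono fun z hz => ?_)
  have hneg : 0 ≤ -p.eval z := by simpa using eval_nonneg_of_mem_bernsteinCone hp' hz
  exact le_antisymm (neg_nonneg.mp hneg) (eval_nonneg_of_mem_bernsteinCone hp hz)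

/-- Repeated integration by parts, which trades powers of `b - X` for powers of `X - a`. -/
theorem exists_primitive_X_sub_C_pow_mul_C_sub_X_pow (a b : K) (i j : ℕ) :
    ∃ q ∈ bernsteinCone a b,
      derivative q = (X - C a) ^ i * (C b - X) ^ j ∧ q.eval a = 0 := by
  induction j generalizing i with
  | zero =>
    have hi : (i + 1 : K) ≠ 0 := by positivity
    refine ⟨(i + 1 : K)⁻¹ • ((X - C a) ^ (i + 1) * (C b - X) ^ 0),
      (bernsteinCone a b).smul_mem (by positivity)
        (X_sub_C_pow_mul_C_sub_X_pow_mem_bernsteinCone a b (i + 1) 0), ?_, by simp⟩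
    rw [derivative_smul, inv_smul_eq_iff₀ hi]
    simp [derivative_pow, smul_eq_C_mul]
  | succ j ih =>
    obtain ⟨q, hq, hder, ha⟩ := ih (i + 1)
    refine ⟨(i + 1 : K)⁻¹ • ((X - C a) ^ (i + 1) * (C b - X) ^ (j + 1) + (j + 1 : K) • q),
      (bernsteinCone a b).smul_mem (by positivity)
        (add_mem (X_sub_C_pow_mul_C_sub_X_pow_mem_bernsteinCone a b (i + 1) (j + 1))
          ((bernsteinCone a b).smul_mem (by positivity) hq)), ?_, by simp [ha]⟩
    have hi : (i + 1 : K) ≠ 0 := by positivity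
    rw [derivative_smul, inv_smul_eq_iff₀ hi]
    simp only [smul_eq_C_mul, map_add, map_natCast, map_one, derivative_mul, derivative_pow,
      derivative_sub, derivative_X, derivative_C, derivative_natCast,
      derivative_one, hder, Nat.cast_add, Nat.cast_one, add_tsub_cancel_right]
    ring

theorem exists_primitive_mem_bernsteinCone (hp : p ∈ bernsteinCone a b) :
    ∃ q ∈ bernsteinCone a b, derivative q = p ∧ q.eval a = 0 := by
  induction hp using Submodule.span_induction with
  | mem _ hp =>
    obtain ⟨⟨i, j⟩, rfl⟩ := hp
    exact exists_primitive_X_sub_C_pow_mul_C_sub_X_pow a b i j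
  | zero => exact ⟨0, zero_mem _, by simp⟩
  | add _ _ _ _ h₁ h₂ =>
    obtain ⟨q₁, hq₁, rfl, ha₁⟩ := h₁
    obtain ⟨q₂, hq₂, rfl, ha₂⟩ := h₂
    exact ⟨q₁ + q₂, add_mem hq₁ hq₂, by simp [ha₁, ha₂]⟩
  | smul c _ _ h =>
    obtain ⟨q, hq, rfl, ha⟩ := h
    exact ⟨c • q, Submodule.smul_mem _ c hq, by simp [ha]⟩

theorem sub_C_eval_mem_bernsteinCone (hp : derivative p ∈ bernsteinCone a b) :
    p - C (p.eval a) ∈ bernsteinCone a b := by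
  obtain ⟨q, hq, hder, ha⟩ := exists_primitive_mem_bernsteinCone hp
  have hconst : p - q = C ((p - q).coeff 0) :=
    eq_C_of_derivative_eq_zero (by rw [derivative_sub, hder, sub_self])
  have hcoeff : p.eval a = (p - q).coeff 0 := by
    simpa only [eval_sub, ha, sub_zero, eval_C] using congrArg (eval a) hconst
  rwa [hcoeff, ← hconst, sub_sub_cancel]

theorem C_eval_sub_mem_bernsteinCone (hp : derivative p ∈ bernsteinCone a b) :
    C (p.eval b) - p ∈ bernsteinCone a b := by
  set r : K[X] := C (a + b) - X with hr
  have hinv : r.comp r = X := by simp [hr]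
  have hder : derivative (-p.comp r) ∈ bernsteinCone a b := by
    simpa [hr, derivative_comp] using comp_C_add_sub_X_mem_bernsteinCone hp
  have heval : (-p.comp r).eval a = -p.eval b := by simp [hr]
  have h := comp_C_add_sub_X_mem_bernsteinCone (sub_C_eval_mem_bernsteinCone hder)
  rwa [← hr, heval, sub_comp, neg_comp, comp_assoc, hinv, comp_X, C_comp, C_neg, sub_neg_eq_add,
    neg_add_eq_sub] at h

theorem mem_bernsteinCone_or_neg_mem_of_derivative_mem (hp : derivative p ∈ bernsteinCone a b)
    (hab : 0 ≤ p.eval a * p.eval b) : p ∈ bernsteinCone a b ∨ -p ∈ bernsteinCone a b := by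
  rcases le_or_gt 0 (p.eval a) with ha | ha
  · left
    simpa using add_mem (sub_C_eval_mem_bernsteinCone hp) (C_mem_bernsteinCone ha)
  · right
    have hb : 0 ≤ -p.eval b := neg_nonneg.mpr (nonpos_of_mul_nonneg_right hab ha)
    have h := add_mem (C_eval_sub_mem_bernsteinCone hp) (C_mem_bernsteinCone hb)
    rwa [C_neg, sub_add_eq_add_sub, add_neg_cancel, zero_sub] at h

theorem mem_bernsteinCone_or_neg_mem_of_iterate_derivative
    (hp : ∀ i, 0 ≤ (derivative^[i] p).eval a * (derivative^[i] p).eval b) :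
    p ∈ bernsteinCone a b ∨ -p ∈ bernsteinCone a b := by
  induction hn : p.natDegree generalizing p with
  | zero =>
    obtain ⟨c, rfl⟩ := natDegree_eq_zero.mp hn
    rcases le_total 0 c with hc | hc
    · exact .inl (C_mem_bernsteinCone hc)
    · exact .inr (C_neg (R := K) ▸ C_mem_bernsteinCone (neg_nonneg.mpr hc))
  | succ n ih =>
    have hab : 0 ≤ p.eval a * p.eval b := hp 0
    rcases ih (fun i => hp (i + 1)) (by rw [natDegree_derivative, hn, n.add_sub_cancel])
      with hder | hder
    · exact mem_bernsteinCone_or_neg_mem_of_derivative_mem hder hab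
    · have h := mem_bernsteinCone_or_neg_mem_of_derivative_mem (p := -p)
        (by rwa [derivative_neg]) (by rwa [eval_neg, eval_neg, neg_mul_neg])
      rwa [neg_neg, or_comm] at h

theorem eq_zero_of_derivative_mem_bernsteinCone (hab : a < b)
    (hp : derivative p ∈ bernsteinCone a b) (ha : p.eval a = 0) (hb : p.eval b = 0) : p = 0 := by
  refine eq_zero_of_mem_bernsteinCone_of_neg_mem hab ?_ ?_
  · simpa [ha] using sub_C_eval_mem_bernsteinCone hp
  · simpa [hb] using C_eval_sub_mem_bernsteinCone hp

theorem root_eq_of_iterate_derivative_eval_mul_nonneg (hp : p ≠ 0) (ha : p.eval a = 0)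
    (hb : p.eval b = 0)
    (hab : ∀ i, 0 ≤ (derivative^[i] p).eval a * (derivative^[i] p).eval b) : a = b := by
  by_contra hne
  wlog hlt : a < b generalizing a b
  · exact this hb ha (fun i => mul_comm (eval a _) _ ▸ hab i) (Ne.symm hne)
      (lt_of_le_of_ne (not_lt.mp hlt) (Ne.symm hne))
  refine hp ?_
  rcases mem_bernsteinCone_or_neg_mem_of_iterate_derivative fun i => hab (i + 1) with hder | hder
  · exact eq_zero_of_derivative_mem_bernsteinCone hlt hder ha hb
  · rw [← derivative_neg] at hder
    exact neg_eq_zero.mp <| eq_zero_of_derivative_mem_bernsteinCone hlt hder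
      (by rw [eval_neg, ha, neg_zero]) (by rw [eval_neg, hb, neg_zero])

end Field

/-- The realization of the weak sign condition associated to the signs at `x` of `P` and its
derivatives: all equalities are kept and all strict inequalities are relaxed. Derivatives of order
larger than the degree vanish identically and impose no condition. -/
def weakSignRealization {R : Type*} [Semiring R] [Preorder R] (P : R[X]) (x : R) : Set R :=
  {y | ∀ i : ℕ, i ≤ P.natDegree →
    ((derivative^[i] P).eval x = 0 → (derivative^[i] P).eval y = 0) ∧
    (0 < (derivative^[i] P).eval x → 0 ≤ (derivative^[i] P).eval y) ∧
    ((derivative^[i] P).eval x < 0 → (derivative^[i] P).eval y ≤ 0)}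

theorem self_mem_weakSignRealization {R : Type*} [Semiring R] [Preorder R] (P : R[X]) (x : R) :
    x ∈ weakSignRealization P x :=
  fun _ _ => ⟨id, le_of_lt, le_of_lt⟩

theorem iterate_derivative_eval_mul_nonneg_of_mem_weakSignRealization {R : Type*} [Ring R]
    [LinearOrder R] [IsOrderedRing R] {P : R[X]} {x y : R}
    (hy : y ∈ weakSignRealization P x) (i : ℕ) :
    0 ≤ (derivative^[i] P).eval x * (derivative^[i] P).eval y := by
  rcases lt_or_ge P.natDegree i with hi | hi
  · simp [iterate_derivative_eq_zero hi]
  · obtain ⟨-, hpos, hneg⟩ := hy i hi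
    rcases lt_trichotomy ((derivative^[i] P).eval x) 0 with h | h | h
    · exact mul_nonneg_of_nonpos_of_nonpos h.le (hneg h)
    · rw [h, zero_mul]
    · exact mul_nonneg h.le (hpos h)

theorem iterate_derivative_ne_zero_of_le_natDegree {R : Type*} [Semiring R]
    [IsAddTorsionFree R] {p : R[X]} (hp : p ≠ 0) {k : ℕ} (hk : k ≤ p.natDegree) :
    derivative^[k] p ≠ 0 := by
  intro h
  have hcoeff : p.natDegree.descFactorial k • p.leadingCoeff = 0 := by
    simpa only [coeff_iterate_derivative, Nat.sub_add_cancel hk, coeff_zero, coeff_natDegree] using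
      congrArg (coeff · (p.natDegree - k)) h
  rcases smul_eq_zero.mp hcoeff with h | h
  · exact hk.not_gt (Nat.descFactorial_eq_zero_iff_lt.mp h)
  · exact hp (leadingCoeff_eq_zero.mp h)

theorem root_unique_in_weak_sign_condition_general {K : Type*} [Field K] [LinearOrder K]
    [IsStrictOrderedRing K] {P : K[X]} (hP : P ≠ 0) {x : K}
    (hx : ∃ k ≤ P.natDegree, (derivative^[k] P).eval x = 0) : weakSignRealization P x = {x} := by
  obtain ⟨k, hk, hxk⟩ := hx
  refine Set.eq_singleton_iff_unique_mem.mpr ⟨self_mem_weakSignRealization P x, fun y hy => ?_⟩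
  refine (root_eq_of_iterate_derivative_eval_mul_nonneg
    (iterate_derivative_ne_zero_of_le_natDegree hP hk) hxk ((hy k hk).1 hxk) fun i => ?_).symm
  rw [← Function.iterate_add_apply]
  exact iterate_derivative_eval_mul_nonneg_of_mem_weakSignRealization hy (i + k)

/-- A real root `x` of a nonzero polynomial `P` of degree `n` is the unique point of the
realization of the weak sign condition associated to the Thom encoding of `x`. -/
theorem root_unique_in_weak_sign_condition
    (P : Polynomial ℝ) (hP : P ≠ 0) (x : ℝ) (hx : P.eval x = 0) :
    ∀ y : ℝ,
      (∀ i : ℕ, i ≤ P.natDegree →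
        ((Polynomial.derivative^[i] P).eval x = 0 →
          (Polynomial.derivative^[i] P).eval y = 0) ∧
        (0 < (Polynomial.derivative^[i] P).eval x →
          0 ≤ (Polynomial.derivative^[i] P).eval y) ∧
        ((Polynomial.derivative^[i] P).eval x < 0 →
          (Polynomial.derivative^[i] P).eval y ≤ 0))
      ↔ y = x := by
  exact Set.ext_iff.mp <| root_unique_in_weak_sign_condition_general hP ⟨0, Nat.zero_le _, hx⟩
end

section
/- Let n ≥ 1 and for each j ∈ {1, …, n} let f_j be a real polynomial in the variables X_1, …, X_j (viewed as a polynomial in X_1, …, X_n not involving X_{j+1}, …, X_n), and let d_j be the degree of f_j in the variable X_j. Let t = (t_1, …, t_n) ∈ ℝⁿ be a point such that for every j: f_j(t) = 0, and there exists 0 ≤ h ≤ d_j with (∂^h f_j / ∂X_j^h)(t) ≠ 0. Then t is the unique point y ∈ ℝⁿ with the following property: for every j ∈ {1, …, n} and every 0 ≤ h ≤ d_j, writing g = ∂^h f_j / ∂X_j^h (the h-fold partial derivative of f_j with respect to X_j), one has g(y) = 0 whenever g(t) = 0, g(y) ≥ 0 whenever g(t) > 0, and g(y) ≤ 0 whenever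 g(t) < 0. -/
/-!
Restrict `f_j` to the line through `t` parallel to the `X_j`-axis. This gives a nonzero univariate
polynomial vanishing at `t_j`, whose derivatives satisfy at `t_j` and at `y_j` the same weak sign
conditions, provided `y` and `t` agree in the earlier coordinates. By Thom's lemma, prescribing weak
signs for all derivatives of a univariate polynomial `p` cuts out an interval: by induction on the
degree the conditions on the derivatives of `p'` do, and on that interval `p'` has constant weak
sign, so `p` is monotone there. If moreover the sign prescribed for `p` itself is `0`, the interval
consists of roots of `p`, hence has at most one point, so `y_j = t_j`. Well-founded induction on `j`
concludes.
-/

open Polynomial Set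

section WeakSign

variable {α : Type*} [Zero α]

/-- The weak sign condition given by the sign of `s`: the closed half-line obtained by relaxing the
strict inequality that `s` satisfies, or the point `0` if `s = 0`. Signs are encoded by elements of
`α`, of which only the sign matters, because the prescribed signs are those of polynomial values. -/
def weakSign [Preorder α] (s : α) : Set α :=
  {u | (s = 0 → u = 0) ∧ (0 < s → 0 ≤ u) ∧ (s < 0 → u ≤ 0)}

theorem self_mem_weakSign [Preorder α] (s : α) : s ∈ weakSign s :=
  ⟨id, le_of_lt, le_of_lt⟩

theorem ordConnected_weakSign [PartialOrder α] (s : α) : OrdConnected (weakSign s) :=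
  ⟨fun _ hx _ hy _ hz ↦
    ⟨fun hs ↦ le_antisymm (hz.2.trans (hy.1 hs).le) ((hx.1 hs).ge.trans hz.1),
      fun hs ↦ (hx.2.1 hs).trans hz.1, fun hs ↦ hz.2.trans (hy.2.2 hs)⟩⟩

theorem weakSign_subset_Ici [PartialOrder α] {s : α} (hs : 0 ≤ s) : weakSign s ⊆ Ici 0 :=
  fun _ hu ↦ hs.eq_or_lt.elim (fun h ↦ (hu.1 h.symm).ge) hu.2.1

theorem weakSign_subset_Iic [PartialOrder α] {s : α} (hs : s ≤ 0) : weakSign s ⊆ Iic 0 :=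
  fun _ hu ↦ hs.eq_or_lt.elim (fun h ↦ (hu.1 h).le) hu.2.2

end WeakSign

section Monotone

variable {α β : Type*} [Preorder α] [Preorder β] {f : α → β} {D : Set α} {T : Set β}

theorem ordConnected_inter_preimage_of_monotoneOn (hf : MonotoneOn f D) (hD : D.OrdConnected)
    (hT : T.OrdConnected) : (D ∩ f ⁻¹' T).OrdConnected :=
  ⟨fun _ hx _ hy _ hz ↦
    have hzD := hD.out hx.1 hy.1 hz
    ⟨hzD, hT.out hx.2 hy.2 ⟨hf hx.1 hzD hz.1, hf hzD hy.1 hz.2⟩⟩⟩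

theorem ordConnected_inter_preimage_of_antitoneOn (hf : AntitoneOn f D) (hD : D.OrdConnected)
    (hT : T.OrdConnected) : (D ∩ f ⁻¹' T).OrdConnected :=
  ⟨fun _ hx _ hy _ hz ↦
    have hzD := hD.out hx.1 hy.1 hz
    ⟨hzD, hT.out hy.2 hx.2 ⟨hf hzD hy.1 hz.2, hf hx.1 hzD hz.1⟩⟩⟩

end Monotone

theorem monotoneOn_or_antitoneOn_of_deriv_mem_weakSign {D : Set ℝ} (hD : Convex ℝ D) {f : ℝ → ℝ}
    (hf : ContinuousOn f D) (hf' : DifferentiableOn ℝ f (interior D)) {s : ℝ}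
    (hs : ∀ x ∈ interior D, deriv f x ∈ weakSign s) : MonotoneOn f D ∨ AntitoneOn f D :=
  (le_total 0 s).imp
    (fun h ↦ monotoneOn_of_deriv_nonneg hD hf hf' fun x hx ↦ weakSign_subset_Ici h (hs x hx))
    (fun h ↦ antitoneOn_of_deriv_nonpos hD hf hf' fun x hx ↦ weakSign_subset_Iic h (hs x hx))

section ThomCell

/-- The realization of the weak sign condition that prescribes, for each `h ≤ N`, the sign of `s h`
for the `h`-th derivative of `p`. The bound `N` is meant to be at least the degree of `p`; it is
kept separate because the degree of a multivariate polynomial in one variable may drop when the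
others are specialized. -/
def weakThomCell {R : Type*} [Semiring R] [Preorder R] (p : R[X]) (s : ℕ → R) (N : ℕ) : Set R :=
  {x | ∀ h ≤ N, (derivative^[h] p).eval x ∈ weakSign (s h)}

theorem weakThomCell_zero {R : Type*} [Semiring R] [Preorder R] (p : R[X]) (s : ℕ → R) :
    weakThomCell p s 0 = (fun x ↦ p.eval x) ⁻¹' weakSign (s 0) := by
  simp [weakThomCell, preimage]

theorem weakThomCell_succ {R : Type*} [Semiring R] [Preorder R] (p : R[X]) (s : ℕ → R) (N : ℕ) :
    weakThomCell p s (N + 1) =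
      weakThomCell (derivative p) (fun h ↦ s (h + 1)) N ∩
        (fun x ↦ p.eval x) ⁻¹' weakSign (s 0) := by
  ext x
  refine ⟨fun hx ↦ ⟨fun h hN ↦ hx (h + 1) (by lia), hx 0 (by lia)⟩, fun hx h hN ↦ ?_⟩
  cases h with
  | zero => exact hx.2
  | succ h => exact hx.1 h (by lia)

theorem ordConnected_weakThomCell {p : ℝ[X]} {N : ℕ} (hp : p.natDegree ≤ N) (s : ℕ → ℝ) :
    (weakThomCell p s N).OrdConnected := by
  induction N generalizing p s with
  | zero =>
    rw [weakThomCell_zero, eq_C_of_natDegree_le_zero hp]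
    exact (ordConnected_weakSign _).preimage_mono (by simpa using monotone_const)
  | succ N ih =>
    rw [weakThomCell_succ]
    set D := weakThomCell (derivative p) (fun h ↦ s (h + 1)) N
    have hD : D.OrdConnected := ih ((natDegree_derivative_le p).trans (by lia)) _
    have hderiv : ∀ x ∈ D, deriv (fun x ↦ p.eval x) x ∈ weakSign (s 1) :=
      fun x hx ↦ p.deriv (x := x) ▸ hx 0 N.zero_le
    rcases monotoneOn_or_antitoneOn_of_deriv_mem_weakSign hD.convex p.continuousOn
      p.differentiableOn fun x hx ↦ hderiv x (interior_subset hx) with hmono | hanti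
    · exact ordConnected_inter_preimage_of_monotoneOn hmono hD (ordConnected_weakSign _)
    · exact ordConnected_inter_preimage_of_antitoneOn hanti hD (ordConnected_weakSign _)

theorem subsingleton_weakThomCell {p : ℝ[X]} {N : ℕ} (hp : p.natDegree ≤ N) (hp₀ : p ≠ 0)
    {s : ℕ → ℝ} (hs : s 0 = 0) : (weakThomCell p s N).Subsingleton := by
  have hroots : weakThomCell p s N ⊆ {x | p.IsRoot x} := fun x hx ↦ (hx 0 N.zero_le).1 hs
  have hfin : (weakThomCell p s N).Finite := (finite_setOfPred_isRoot hp₀).subset hroots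
  exact hfin.countable.isTotallyDisconnected _ subset_rfl
    (ordConnected_weakThomCell hp s).isPreconnected

end ThomCell

section LineRestriction

variable {σ R : Type*} [DecidableEq σ] [CommSemiring R] (j : σ) (y : σ → R)

/-- Restriction of multivariate polynomials to the line through `y` parallel to the `j`-th axis,
parametrized by the `j`-th coordinate: `X j` becomes the univariate variable, and every other `X i`
is specialized to `y i`. -/
noncomputable def lineRestriction : MvPolynomial σ R →ₐ[R] R[X] :=
  MvPolynomial.aeval (Function.update (fun i ↦ C (y i)) j X)

theorem lineRestriction_X_self : lineRestriction j y (MvPolynomial.X j) = X := by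
  simp [lineRestriction]

theorem lineRestriction_X_of_ne {i : σ} (h : i ≠ j) :
    lineRestriction j y (MvPolynomial.X i) = C (y i) := by
  simp [lineRestriction, h]

theorem eval_lineRestriction (x : R) (g : MvPolynomial σ R) :
    (lineRestriction j y g).eval x = MvPolynomial.eval (Function.update y j x) g := by
  have h : (evalRingHom x).comp (lineRestriction j y : MvPolynomial σ R →+* R[X]) =
      MvPolynomial.eval (Function.update y j x) := by
    refine MvPolynomial.ringHom_ext (fun r ↦ by simp) fun i ↦ ?_
    rcases eq_or_ne i j with rfl | hij
    · simp [lineRestriction_X_self]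
    · simp [lineRestriction_X_of_ne, hij]
  exact congr($h g)

theorem lineRestriction_pderiv (g : MvPolynomial σ R) :
    lineRestriction j y (MvPolynomial.pderiv j g) = derivative (lineRestriction j y g) := by
  induction g using MvPolynomial.induction_on with
  | C r => simp
  | add p q hp hq => simp only [map_add, hp, hq]
  | mul_X p i hp =>
    rcases eq_or_ne i j with rfl | hij
    · simp [lineRestriction_X_self, hp, mul_comm]
    · simp [MvPolynomial.pderiv_X_of_ne hij, lineRestriction_X_of_ne _ _ hij, hp, mul_comm]

theorem lineRestriction_iterate_pderiv (h : ℕ) (g : MvPolynomial σ R) :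
    lineRestriction j y ((MvPolynomial.pderiv j)^[h] g) = derivative^[h] (lineRestriction j y g) :=
  Function.Semiconj.iterate_right (lineRestriction_pderiv j y) h g

theorem eval_iterate_pderiv_eq (h : ℕ) (g : MvPolynomial σ R) :
    MvPolynomial.eval y ((MvPolynomial.pderiv j)^[h] g) =
      (derivative^[h] (lineRestriction j y g)).eval (y j) := by
  rw [← lineRestriction_iterate_pderiv, eval_lineRestriction, Function.update_eq_self]

theorem natDegree_lineRestriction_le (g : MvPolynomial σ R) :
    (lineRestriction j y g).natDegree ≤ g.degreeOf j := by
  have hfactor (m : σ →₀ ℕ) (i : σ) :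
      (Function.update (fun i ↦ C (y i)) j X i ^ m i).natDegree ≤ if i = j then m i else 0 := by
    rcases eq_or_ne i j with rfl | hij
    · simpa using natDegree_X_pow_le (R := R) (m i)
    · simp only [Function.update_of_ne hij, if_neg hij, ← C_pow, natDegree_C, le_refl]
  rw [lineRestriction, MvPolynomial.aeval_def, MvPolynomial.eval₂_eq]
  refine natDegree_sum_le_of_forall_le _ _ fun m hm ↦ ?_
  calc
    _ ≤ (∏ i ∈ m.support, Function.update (fun i ↦ C (y i)) j X i ^ m i).natDegree :=
      natDegree_C_mul_le _ _
    _ ≤ ∑ i ∈ m.support, (Function.update (fun i ↦ C (y i)) j X i ^ m i).natDegree :=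
      natDegree_prod_le _ _
    _ ≤ ∑ i ∈ m.support, if i = j then m i else 0 := Finset.sum_le_sum fun i _ ↦ hfactor m i
    _ ≤ m j := by rw [Finset.sum_ite_eq']; split_ifs <;> simp
    _ ≤ g.degreeOf j := MvPolynomial.monomial_le_degreeOf j hm

variable {j y}

theorem lineRestriction_congr {t : σ → R} {g : MvPolynomial σ R}
    (h : ∀ i ∈ g.vars, i ≠ j → y i = t i) : lineRestriction j y g = lineRestriction j t g := by
  refine MvPolynomial.hom_congr_vars (f₁ := (lineRestriction j y : MvPolynomial σ R →+* R[X]))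
    (f₂ := (lineRestriction j t : MvPolynomial σ R →+* R[X])) (by ext; simp) (fun i hi _ ↦ ?_) rfl
  rcases eq_or_ne i j with rfl | hij
  · simp [lineRestriction_X_self]
  · simp [lineRestriction_X_of_ne _ _ hij, h i hi hij]

end LineRestriction

theorem apply_eq_of_eval_iterate_pderiv_mem_weakSign {σ : Type*} {g : MvPolynomial σ ℝ} {j : σ}
    {t y : σ → ℝ} (hroot : MvPolynomial.eval t g = 0)
    (hnz : ∃ h : ℕ, MvPolynomial.eval t ((MvPolynomial.pderiv j)^[h] g) ≠ 0)
    (hyt : ∀ i ∈ g.vars, i ≠ j → y i = t i)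
    (hsign : ∀ h ≤ g.degreeOf j, MvPolynomial.eval y ((MvPolynomial.pderiv j)^[h] g) ∈
      weakSign (MvPolynomial.eval t ((MvPolynomial.pderiv j)^[h] g))) :
    y j = t j := by
  classical
  set s : ℕ → ℝ := fun h ↦ MvPolynomial.eval t ((MvPolynomial.pderiv j)^[h] g) with hs
  set p : ℝ[X] := lineRestriction j t g with hp
  have hp₀ : p ≠ 0 := fun h₀ ↦ by
    obtain ⟨h, hh⟩ := hnz
    simp [eval_iterate_pderiv_eq, ← hp, h₀] at hh
  have ht : t j ∈ weakThomCell p s (g.degreeOf j) := fun h _ ↦ by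
    simpa only [hs, eval_iterate_pderiv_eq] using self_mem_weakSign _
  have hy : y j ∈ weakThomCell p s (g.degreeOf j) := fun h hh ↦ by
    rw [hp, ← lineRestriction_congr hyt, ← eval_iterate_pderiv_eq]
    exact hsign h hh
  exact subsingleton_weakThomCell (natDegree_lineRestriction_le j t g) hp₀ hroot hy ht

theorem triangular_thom_encoding_unique_general {σ : Type*} [PartialOrder σ] [WellFoundedLT σ]
    (f : σ → MvPolynomial σ ℝ) (htri : ∀ j, ∀ i ∈ (f j).vars, i ≤ j) (t : σ → ℝ)
    (hroot : ∀ j, MvPolynomial.eval t (f j) = 0)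
    (hnz : ∀ j, ∃ h : ℕ, MvPolynomial.eval t ((MvPolynomial.pderiv j)^[h] (f j)) ≠ 0)
    (y : σ → ℝ) :
    (∀ j, ∀ h ≤ (f j).degreeOf j, MvPolynomial.eval y ((MvPolynomial.pderiv j)^[h] (f j)) ∈
        weakSign (MvPolynomial.eval t ((MvPolynomial.pderiv j)^[h] (f j)))) ↔ y = t := by
  refine ⟨fun hsign ↦ funext fun j ↦ ?_, fun hyt j h _ ↦ hyt ▸ self_mem_weakSign _⟩
  induction j using WellFoundedLT.induction with
  | _ j ih =>
    have hyt : ∀ i ∈ (f j).vars, i ≠ j → y i = t i :=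
      fun i hi hij ↦ ih i ((htri j i hi).lt_of_ne hij)
    exact apply_eq_of_eval_iterate_pderiv_mem_weakSign (hroot j) (hnz j) hyt (hsign j)

/-- Triangular Thom encodings characterize their associated point: given a triangular
system `f_j ∈ ℝ[X_1,…,X_j]`, `1 ≤ j ≤ n`, and a point `t` such that each `f_j`
vanishes at `t` and some iterated partial derivative `∂^h f_j/∂X_j^h` (`0 ≤ h ≤ d_j`,
`d_j = deg_{X_j} f_j`) does not vanish at `t`, the point `t` is the unique point of the
realization of the weak sign condition associated to the signs at `t` of all these
iterated partial derivatives. -/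
theorem triangular_thom_encoding_unique
    (n : ℕ) (hn : 1 ≤ n) (f : Fin n → MvPolynomial (Fin n) ℝ)
    (htri : ∀ j i : Fin n, j < i → ∀ m ∈ (f j).support, m i = 0)
    (t : Fin n → ℝ)
    (hroot : ∀ j : Fin n, MvPolynomial.eval t (f j) = 0)
    (hnz : ∀ j : Fin n, ∃ h : ℕ, h ≤ (f j).degreeOf j ∧
      MvPolynomial.eval t ((MvPolynomial.pderiv j)^[h] (f j)) ≠ 0) :
    ∀ y : Fin n → ℝ,
      (∀ j : Fin n, ∀ h : ℕ, h ≤ (f j).degreeOf j →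
        (MvPolynomial.eval t ((MvPolynomial.pderiv j)^[h] (f j)) = 0 →
          MvPolynomial.eval y ((MvPolynomial.pderiv j)^[h] (f j)) = 0) ∧
        (0 < MvPolynomial.eval t ((MvPolynomial.pderiv j)^[h] (f j)) →
          0 ≤ MvPolynomial.eval y ((MvPolynomial.pderiv j)^[h] (f j))) ∧
        (MvPolynomial.eval t ((MvPolynomial.pderiv j)^[h] (f j)) < 0 →
          MvPolynomial.eval y ((MvPolynomial.pderiv j)^[h] (f j)) ≤ 0))
      ↔ y = t := by
  have hvars (j : Fin n) : ∀ i ∈ (f j).vars, i ≤ j := fun i hi ↦ by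
    obtain ⟨m, hm, him⟩ := (MvPolynomial.mem_vars_iff_mem_support i).mp hi
    exact not_lt.mp fun hji ↦ Finsupp.mem_support_iff.mp him (htri j i hji m hm)
  exact triangular_thom_encoding_unique_general f hvars t hroot
    fun j ↦ (hnz j).imp fun _ ↦ And.right
end

section
/- Let k ≥ 2, let a < b be real numbers, and for j = 2, …, k let h_j : (a, b) → ℝ be continuous functions with bounded image such that for some δ > 0 each h_j is monotone (nondecreasing or nonincreasing) on (a, a + δ) ∩ (a, b) and on (b − δ, b) ∩ (a, b). Let C = {(x, h_2(x), …, h_k(x)) : x ∈ (a, b)} ⊂ ℝᵏ, and for 2 ≤ j ≤ k let π_{1,j} : ℝᵏ → ℝ² denote the projection (x_1, …, x_k) ↦ (x_1, x_j). Then the topological closure of C equals the intersection over j = 2, …, k of the sets π_{1,j}^{-1}(clos(π_{1,j}(C))), where clos denotes topological closure. -/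
/-!
A point lies over `x` in the closure of a graph exactly when its other coordinate is a cluster value
of the function at `x`. In each planar projection such values are approached along some sequence of
parameters tending to `x`, but different projections may need different sequences. Monotonicity near
the endpoints and continuity elsewhere rule this out: any cluster value is then the limit, so all
coordinates converge together to the given point. A monotone function that escapes to infinity at an
endpoint has no cluster value there, so no point of the intersection lies over that endpoint.
-/

open Filter Set Topology

/-- `u` does not oscillate along `l`: any cluster value of `u` along `l` is its limit. Having no
cluster value at all, for instance by escaping to infinity, is allowed. -/
def Nonoscillating {X Y : Type*} [TopologicalSpace Y] (u : X → Y) (l : Filter X) : Prop :=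
  ∀ ⦃y⦄, MapClusterPt y l u → Tendsto u l (𝓝 y)

/-- The segment over `S` of the curve in `∏ i, Y i` that is parametrized by its `i₀`-th coordinate
and has the functions `h i`, `i ≠ i₀`, as its other coordinates. The entry `h i₀` is ignored. -/
def curveSegment {ι : Type*} [DecidableEq ι] {Y : ι → Type*} (i₀ : ι) (h : ∀ i, Y i₀ → Y i)
    (S : Set (Y i₀)) : Set (∀ i, Y i) :=
  (fun x => Function.update (fun i => h i x) i₀ x) '' S

theorem mem_closure_graphOn_iff_mapClusterPt {X Y : Type*} [TopologicalSpace X]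
    [TopologicalSpace Y] {f : X → Y} {S : Set X} {x : X} {y : Y} :
    (x, y) ∈ closure (S.graphOn f) ↔ MapClusterPt y (𝓝[S] x) f :=
  calc
    (x, y) ∈ closure (S.graphOn f)
    _ ↔ NeBot (comap (fun t => (t, f t)) (𝓝 (x, y)) ⊓ 𝓟 S) := by
      rw [mem_closure_iff_clusterPt, ClusterPt, graphOn, ← map_principal, neBot_inf_comap_iff_map']
    _ ↔ NeBot (comap f (𝓝 y) ⊓ 𝓝[S] x) := by
      simp only [nhds_prod_eq, comap_prod, Function.comp_def, comap_id', nhdsWithin, inf_comm,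
        inf_left_comm]
    _ ↔ MapClusterPt y (𝓝[S] x) f := neBot_inf_comap_iff_map'

namespace Nonoscillating

theorem of_tendsto {X Y : Type*} [TopologicalSpace Y] [T2Space Y] {u : X → Y} {l : Filter X}
    {y : Y} (hu : Tendsto u l (𝓝 y)) : Nonoscillating u l := fun z hz => by
  have : NeBot (𝓝 z ⊓ 𝓝 y) := (hz.clusterPt.mono hu).neBot
  rwa [eq_of_nhds_neBot this]

section Monotone

variable {α β : Type*} [Preorder α] [LinearOrder β] [TopologicalSpace β] [OrderTopology β]
  {g : α → β} {s : Set α} {l : Filter α}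

theorem of_monotoneOn_of_Iic_mem (hg : MonotoneOn g s) (hs : s ∈ l) (hl : ∀ x ∈ s, Iic x ∈ l) :
    Nonoscillating g l := by
  intro y hy
  refine tendsto_order.2 ⟨fun c hc => ?_, fun c hc => ?_⟩
  · have large_often : ∃ᶠ x in l, c < g x := hy.frequently (eventually_gt_nhds hc)
    filter_upwards [hs] with x hx
    obtain ⟨x', hcx', hx's, hx'x⟩ :=
      (large_often.and_eventually (inter_mem hs (hl x hx))).exists
    exact hcx'.trans_le (hg hx's hx hx'x)
  · have small_often : ∃ᶠ x in l, g x < c := hy.frequently (eventually_lt_nhds hc)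
    obtain ⟨x', hx'c, hx's⟩ := (small_often.and_eventually hs).exists
    filter_upwards [hs, hl x' hx's] with x hx hxx'
    exact (hg hx hx's hxx').trans_lt hx'c

theorem of_monotoneOn_or_antitoneOn_of_Iic_mem (hg : MonotoneOn g s ∨ AntitoneOn g s)
    (hs : s ∈ l) (hl : ∀ x ∈ s, Iic x ∈ l) : Nonoscillating g l :=
  hg.elim (fun hg => of_monotoneOn_of_Iic_mem hg hs hl)
    (fun hg => of_monotoneOn_of_Iic_mem (β := βᵒᵈ) hg.dual_right hs hl)

theorem of_monotoneOn_or_antitoneOn_of_Ici_mem (hg : MonotoneOn g s ∨ AntitoneOn g s)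
    (hs : s ∈ l) (hl : ∀ x ∈ s, Ici x ∈ l) : Nonoscillating g l :=
  of_monotoneOn_or_antitoneOn_of_Iic_mem (α := αᵒᵈ)
    (hg.symm.imp AntitoneOn.dual_left MonotoneOn.dual_left) hs hl

end Monotone

section Interval

variable {α β : Type*} [LinearOrder α] [TopologicalSpace α] [OrderTopology α]
  [LinearOrder β] [TopologicalSpace β] [OrderTopology β] {g : α → β} {a b c d x : α}

theorem nhdsWithin_Ioo_left (hc : a < c)
    (hg : MonotoneOn g (Ioo a c ∩ Ioo a b) ∨ AntitoneOn g (Ioo a c ∩ Ioo a b)) :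
    Nonoscillating g (𝓝[Ioo a b] a) := by
  refine of_monotoneOn_or_antitoneOn_of_Iic_mem hg ?_ fun x hx =>
    mem_nhdsWithin_of_mem_nhds (Iic_mem_nhds hx.1.1)
  filter_upwards [self_mem_nhdsWithin, mem_nhdsWithin_of_mem_nhds (Iio_mem_nhds hc)]
    with x hx hxc using ⟨⟨hx.1, hxc⟩, hx⟩

theorem nhdsWithin_Ioo_right (hd : d < b)
    (hg : MonotoneOn g (Ioo d b ∩ Ioo a b) ∨ AntitoneOn g (Ioo d b ∩ Ioo a b)) :
    Nonoscillating g (𝓝[Ioo a b] b) := by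
  refine of_monotoneOn_or_antitoneOn_of_Ici_mem hg ?_ fun x hx =>
    mem_nhdsWithin_of_mem_nhds (Ici_mem_nhds hx.1.2)
  filter_upwards [self_mem_nhdsWithin, mem_nhdsWithin_of_mem_nhds (Ioi_mem_nhds hd)]
    with x hx hdx using ⟨⟨hdx, hx.2⟩, hx⟩

theorem nhdsWithin_Ioo_of_mem_closure (hcont : ContinuousOn g (Ioo a b))
    (hleft : ∃ c > a, MonotoneOn g (Ioo a c ∩ Ioo a b) ∨ AntitoneOn g (Ioo a c ∩ Ioo a b))
    (hright : ∃ d < b, MonotoneOn g (Ioo d b ∩ Ioo a b) ∨ AntitoneOn g (Ioo d b ∩ Ioo a b))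
    (hx : x ∈ closure (Ioo a b)) : Nonoscillating g (𝓝[Ioo a b] x) := by
  have hx : x ∈ Icc a b := closure_minimal Ioo_subset_Icc_self isClosed_Icc hx
  rcases hx.1.eq_or_lt with rfl | hax
  · obtain ⟨c, hc, hg⟩ := hleft
    exact nhdsWithin_Ioo_left hc hg
  rcases hx.2.eq_or_lt with rfl | hxb
  · obtain ⟨d, hd, hg⟩ := hright
    exact nhdsWithin_Ioo_right hd hg
  · exact of_tendsto (hcont x ⟨hax, hxb⟩)

end Interval

end Nonoscillating

section CurveSegment

variable {ι : Type*} [DecidableEq ι] {Y : ι → Type*} {i₀ : ι} {h : ∀ i, Y i₀ → Y i}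

theorem image_proj_curveSegment {j : ι} (hj : j ≠ i₀) (S : Set (Y i₀)) :
    (fun p : ∀ i, Y i => (p i₀, p j)) '' curveSegment i₀ h S = S.graphOn (h j) := by
  simp only [curveSegment, graphOn, image_image, Function.update_self,
    Function.update_of_ne hj]

variable [∀ i, TopologicalSpace (Y i)] {S : Set (Y i₀)}

theorem mem_closure_curveSegment {p : ∀ i, Y i} (hp : p i₀ ∈ closure S)
    (hlim : ∀ i ≠ i₀, Tendsto (h i) (𝓝[S] (p i₀)) (𝓝 (p i))) :
    p ∈ closure (curveSegment i₀ h S) := by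
  have : NeBot (𝓝[S] (p i₀)) := mem_closure_iff_nhdsWithin_neBot.1 hp
  have hcurve : Tendsto (fun x => Function.update (fun i => h i x) i₀ x) (𝓝[S] (p i₀)) (𝓝 p) := by
    refine tendsto_pi_nhds.2 fun i => ?_
    rcases eq_or_ne i i₀ with rfl | hi
    · simp only [Function.update_self]
      exact tendsto_id'.2 nhdsWithin_le_nhds
    · simpa only [Function.update_of_ne hi] using hlim i hi
  exact mem_closure_of_tendsto hcurve (eventually_mem_nhdsWithin.mono fun x => mem_image_of_mem _)

theorem closure_curveSegment_eq_iInter_proj [Nontrivial ι]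
    (hosc : ∀ i ≠ i₀, ∀ x ∈ closure S, Nonoscillating (h i) (𝓝[S] x)) :
    closure (curveSegment i₀ h S) =
      ⋂ (j : ι) (_ : j ≠ i₀), (fun p : ∀ i, Y i => (p i₀, p j)) ⁻¹'
        closure ((fun p : ∀ i, Y i => (p i₀, p j)) '' curveSegment i₀ h S) := by
  refine Subset.antisymm (subset_iInter₂ fun j _ => ?_) fun p hp => ?_
  · have hproj : Continuous fun p : ∀ i, Y i => (p i₀, p j) := by fun_prop
    exact image_subset_iff.1 (image_closure_subset_closure_image hproj)
  · have hcluster : ∀ j ≠ i₀, MapClusterPt (p j) (𝓝[S] (p i₀)) (h j) := fun j hj => by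
      have := mem_iInter₂.1 hp j hj
      rwa [mem_preimage, image_proj_curveSegment hj, mem_closure_graphOn_iff_mapClusterPt] at this
    obtain ⟨j, hj⟩ := exists_ne i₀
    have hbase : p i₀ ∈ closure S :=
      mem_closure_iff_nhdsWithin_neBot.2 ((hcluster j hj).neBot.mono inf_le_right).of_map
    exact mem_closure_curveSegment hbase fun i hi => hosc i hi _ hbase (hcluster i hi)

end CurveSegment

theorem closure_curve_segment_eq_iInter_proj_general {ι : Type*} [DecidableEq ι] [Nontrivial ι]
    {Y : ι → Type*} [∀ i, LinearOrder (Y i)] [∀ i, TopologicalSpace (Y i)]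
    [∀ i, OrderTopology (Y i)] {i₀ : ι} {a b : Y i₀} {h : ∀ i, Y i₀ → Y i}
    (hcont : ∀ i ≠ i₀, ContinuousOn (h i) (Ioo a b))
    (hmono_left : ∀ i ≠ i₀, ∃ c > a,
      MonotoneOn (h i) (Ioo a c ∩ Ioo a b) ∨ AntitoneOn (h i) (Ioo a c ∩ Ioo a b))
    (hmono_right : ∀ i ≠ i₀, ∃ d < b,
      MonotoneOn (h i) (Ioo d b ∩ Ioo a b) ∨ AntitoneOn (h i) (Ioo d b ∩ Ioo a b)) :
    closure (curveSegment i₀ h (Ioo a b)) =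
      ⋂ (j : ι) (_ : j ≠ i₀), (fun p : ∀ i, Y i => (p i₀, p j)) ⁻¹'
        closure ((fun p : ∀ i, Y i => (p i₀, p j)) '' curveSegment i₀ h (Ioo a b)) :=
  closure_curveSegment_eq_iInter_proj fun i hi _ hx =>
    .nhdsWithin_Ioo_of_mem_closure (hcont i hi) (hmono_left i hi) (hmono_right i hi) hx

/-- The closure of a bounded curve segment in ℝᵏ (here `k = m + 2 ≥ 2`) parametrized by
its first coordinate (with coordinates continuous on `(a,b)`, of bounded image, and
eventually monotone near both endpoints) equals the intersection of the preimages of the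
closures of its two-dimensional coordinate projections `π_{1,j}`, `2 ≤ j ≤ k`. -/
theorem closure_curve_segment_eq_iInter_proj
    (m : ℕ) (a b : ℝ) (hab : a < b)
    (h : Fin (m + 2) → ℝ → ℝ)
    (hcont : ∀ j : Fin (m + 2), j ≠ 0 → ContinuousOn (h j) (Set.Ioo a b))
    (hbdd : ∀ j : Fin (m + 2), j ≠ 0 → Bornology.IsBounded (h j '' Set.Ioo a b))
    (δ : ℝ) (hδ : 0 < δ)
    (hmono_left : ∀ j : Fin (m + 2), j ≠ 0 →
      MonotoneOn (h j) (Set.Ioo a (a + δ) ∩ Set.Ioo a b) ∨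
      AntitoneOn (h j) (Set.Ioo a (a + δ) ∩ Set.Ioo a b))
    (hmono_right : ∀ j : Fin (m + 2), j ≠ 0 →
      MonotoneOn (h j) (Set.Ioo (b - δ) b ∩ Set.Ioo a b) ∨
      AntitoneOn (h j) (Set.Ioo (b - δ) b ∩ Set.Ioo a b))
    (C : Set (Fin (m + 2) → ℝ))
    (hC : C = {p : Fin (m + 2) → ℝ | ∃ x ∈ Set.Ioo a b,
      p = fun j => if j = 0 then x else h j x}) :
    closure C =
      ⋂ (j : Fin (m + 2)) (_ : j ≠ 0),
        (fun p : Fin (m + 2) → ℝ => (p 0, p j)) ⁻¹'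
          closure ((fun p : Fin (m + 2) → ℝ => (p 0, p j)) '' C) := by
  have hC' : C = curveSegment 0 h (Ioo a b) := by
    simp only [hC, curveSegment, image, funext_iff, Function.update_apply, eq_comm]
  exact hC' ▸ closure_curve_segment_eq_iInter_proj_general hcont
    (fun j hj => ⟨a + δ, lt_add_of_pos_right a hδ, hmono_left j hj⟩)
    (fun j hj => ⟨b - δ, sub_lt_self b hδ, hmono_right j hj⟩)
end
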